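/- There exists a recurrent tiling of ℕ×ℕ, i.e. a function f : ℕ×ℕ → T satisfying (T1), (T2) and (T3), if and only if ¬A is not valid on the frame ⟨ℕ,≤⟩ (equivalently, if and only if A is satisfiable on ⟨ℕ,≤⟩). -/

import Mathlib

namespace FOML

/-- First-order modal formulas over a signature assigning to each arity `n` a type
`Pred n` of `n`-ary predicate letters; individual variables are indexed by `ℕ`.
(0-ary predicate letters are proposition letters.) -/
inductive Fml (Pred : ℕ → Type) : Type
  | atom : {n : ℕ} → Pred n → (Fin n → ℕ) → Fml Pred
  | bot  : Fml Pred
  | imp  : Fml Pred → Fml Pred → Fml Pred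
  | box  : Fml Pred → Fml Pred
  | all  : ℕ → Fml Pred → Fml Pred

namespace Fml

variable {Pred : ℕ → Type}

def neg (φ : Fml Pred) : Fml Pred := imp φ bot
def top : Fml Pred := neg bot
def and (φ ψ : Fml Pred) : Fml Pred := neg (imp φ (neg ψ))
def or (φ ψ : Fml Pred) : Fml Pred := imp (neg φ) ψ
def iff (φ ψ : Fml Pred) : Fml Pred := and (imp φ ψ) (imp ψ φ)
def dia (φ : Fml Pred) : Fml Pred := neg (box (neg φ))
def ex (x : ℕ) (φ : Fml Pred) : Fml Pred := neg (all x (neg φ))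

def bigAnd : List (Fml Pred) → Fml Pred
  | [] => top
  | φ :: l => and φ (bigAnd l)

def bigOr : List (Fml Pred) → Fml Pred
  | [] => bot
  | φ :: l => or φ (bigOr l)

/-- Iterated box: `□⁰φ = φ`, `□ⁿ⁺¹φ = □□ⁿφ`. -/
def boxN : ℕ → Fml Pred → Fml Pred
  | 0, φ => φ
  | n + 1, φ => box (boxN n φ)

/-- Replace every occurrence of `□` by `□⁺`, where `□⁺ψ = ψ ∧ □ψ`
(equivalently, every `◇` by its dual `◇⁺ψ = ◇ψ ∨ ψ`). -/
def plus : Fml Pred → Fml Pred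
  | atom P a => atom P a
  | bot => bot
  | imp φ ψ => imp (plus φ) (plus ψ)
  | box φ => and (plus φ) (box (plus φ))
  | all x φ => all x (plus φ)

end Fml

/-- A Kripke model with expanding domains based on the frame `⟨W, R⟩`:
a domain function `D` into nonempty subsets of the domain `Dom`, expanding along `R`,
and an interpretation `I` of predicate letters at each world, with
`I(w,P) ⊆ D(w)ⁿ` for `n`-ary `P`. -/
structure KModel (W : Type*) (R : W → W → Prop) (Pred : ℕ → Type) where
  Dom : Type
  D : W → Set Dom
  D_ne : ∀ w, (D w).Nonempty
  D_mono : ∀ ⦃w v : W⦄, R w v → D w ⊆ D v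
  I : W → (n : ℕ) → Pred n → (Fin n → Dom) → Prop
  I_dom : ∀ (w : W) (n : ℕ) (P : Pred n) (as : Fin n → Dom), I w n P as → ∀ i, as i ∈ D w

variable {W : Type*} {R : W → W → Prop} {Pred : ℕ → Type}

/-- Truth of a formula at a world of a Kripke model under an assignment. -/
def truth (M : KModel W R Pred) : Fml Pred → W → (ℕ → M.Dom) → Prop
  | .atom (n := n) P args, w, g => M.I w n P (fun i => g (args i))
  | .bot, _, _ => False
  | .imp φ ψ, w, g => truth M φ w g → truth M ψ w g
  | .box φ, w, g => ∀ v : W, R w v → truth M φ v g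
  | .all x φ, w, g => ∀ d ∈ M.D w, truth M φ w (Function.update g x d)

/-- A formula is true at a world `w` if it is true under every assignment
taking values in the domain of `w`. -/
def trueAt (M : KModel W R Pred) (w : W) (φ : Fml Pred) : Prop :=
  ∀ g : ℕ → M.Dom, (∀ x, g x ∈ M.D w) → truth M φ w g

/-- `φ ∈ L(W,R)`: validity on the frame `⟨W,R⟩` (truth in every model with
expanding domains based on it, at every world). -/
def ValidOn (R : W → W → Prop) (φ : Fml Pred) : Prop :=
  ∀ (M : KModel W R Pred) (w : W), trueAt M w φ

/-- The model has (globally) constant domains. -/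
def ConstDom (M : KModel W R Pred) : Prop := ∀ w v : W, M.D w = M.D v

/-- `φ ∈ L_c(W,R)`: truth in every model with constant domains based on `⟨W,R⟩`. -/
def ValidOnC (R : W → W → Prop) (φ : Fml Pred) : Prop :=
  ∀ (M : KModel W R Pred), ConstDom M → ∀ w : W, trueAt M w φ

/-- A finite set `T = {t₀, …, t_s}` of tile types (represented as `Fin (s+1)`, with
`t₀ = 0`), each with four edge colours. -/
structure TileSet where
  s : ℕ
  left : Fin (s + 1) → ℕ
  right : Fin (s + 1) → ℕ
  up : Fin (s + 1) → ℕ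
  down : Fin (s + 1) → ℕ

namespace TileSet

/-- (T1): colours match horizontally. -/
def T1 (ts : TileSet) (f : ℕ → ℕ → Fin (ts.s + 1)) : Prop :=
  ∀ n m : ℕ, ts.right (f n m) = ts.left (f (n + 1) m)

/-- (T2): colours match vertically. -/
def T2 (ts : TileSet) (f : ℕ → ℕ → Fin (ts.s + 1)) : Prop :=
  ∀ n m : ℕ, ts.up (f n m) = ts.down (f n (m + 1))

/-- (T3): the tile type `t₀` occurs infinitely often in the leftmost column. -/
def T3 (ts : TileSet) (f : ℕ → ℕ → Fin (ts.s + 1)) : Prop :=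
  {m : ℕ | f 0 m = 0}.Infinite

end TileSet

/-- The predicate letters used in the encoding: a binary letter `◁`; monadic letters
`M`, `P₀, …, P_{s+2}` and `P`; proposition letters `p` and `q`. -/
inductive Letter (s : ℕ) : ℕ → Type
  | lt : Letter s 2
  | M : Letter s 1
  | P : Fin (s + 3) → Letter s 1
  | Pm : Letter s 1
  | p : Letter s 0
  | q : Letter s 0

namespace Enc

/-- Formulas in the language of the encoding. -/
abbrev F (ts : TileSet) := Fml (Letter ts.s)

/-- The list of all tile types. -/
def tiles (ts : TileSet) : List (Fin (ts.s + 1)) := List.finRange (ts.s + 1)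

/-- Tile indices regarded as indices of the letters `P₀, …, P_{s+2}`. -/
def tl (ts : TileSet) (t : Fin (ts.s + 1)) : Fin (ts.s + 3) := ⟨t.1, by omega⟩

def pp (ts : TileSet) : F ts := .atom Letter.p Fin.elim0
def qq (ts : TileSet) : F ts := .atom Letter.q Fin.elim0
def Mx (ts : TileSet) (v : ℕ) : F ts := .atom Letter.M (fun _ => v)
def Px (ts : TileSet) (j : Fin (ts.s + 3)) (v : ℕ) : F ts := .atom (Letter.P j) (fun _ => v)
def PP (ts : TileSet) (v : ℕ) : F ts := .atom Letter.Pm (fun _ => v)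
def ltA (ts : TileSet) (v w : ℕ) : F ts := .atom Letter.lt ![v, w]

/-- `⟐φ = ◇(π ∧ ◇(¬π ∧ φ))`, for a "marker" formula `π` (the paper uses `π = p`,
and `π = ∀x P(x)` for the operator `⊡`). -/
def pdia (ts : TileSet) (π φ : F ts) : F ts := .dia (.and π (.dia (.and (.neg π) φ)))

/-- Iterated `⟐`. -/
def pdiaN (ts : TileSet) (π : F ts) : ℕ → F ts → F ts
  | 0, φ => φ
  | n + 1, φ => pdia ts π (pdiaN ts π n φ)

/-- `U(x) = ⋀_{t ∈ T} ¬P_t(x)`, with the tile letters given by `Pf`. -/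
def Ug (ts : TileSet) (Pf : Fin (ts.s + 1) → ℕ → F ts) (v : ℕ) : F ts :=
  .bigAnd ((tiles ts).map (fun t => .neg (Pf t v)))

/- The conjuncts of the formula `A`, parametrised by the formulas standing for
`x ◁ y` (`rel`), `M(x)` (`Mf`), `P_t(x)` (`Pf`) and `p` (`pf`); the individual
variables `x`, `y` are `0`, `1`. -/

/-- `A₀ = ∃x □U(x)` -/
def A0g (ts : TileSet) (Pf : Fin (ts.s + 1) → ℕ → F ts) : F ts :=
  .ex 0 (.box (Ug ts Pf 0))

/-- `A₁ = ∃x(¬U(x) ∧ M(x))` -/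
def A1g (ts : TileSet) (Mf : ℕ → F ts) (Pf : Fin (ts.s + 1) → ℕ → F ts) : F ts :=
  .ex 0 (.and (.neg (Ug ts Pf 0)) (Mf 0))

/-- `A₂ = ∀x∃y (x ◁ y)` -/
def A2g (ts : TileSet) (rel : ℕ → ℕ → F ts) : F ts := .all 0 (.ex 1 (rel 0 1))

/-- `A₃ = ∀x∀y(x◁y → □(∃x M(x) → x◁y))` -/
def A3g (ts : TileSet) (rel : ℕ → ℕ → F ts) (Mf : ℕ → F ts) : F ts :=
  .all 0 (.all 1 (.imp (rel 0 1) (.box (.imp (.ex 0 (Mf 0)) (rel 0 1)))))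

/-- `A₄ = ∀x∀y(x◁y → □(M(x) ↔ ¬p ∧ ⟐M(y) ∧ ¬⟐²M(y)))` -/
def A4g (ts : TileSet) (rel : ℕ → ℕ → F ts) (Mf : ℕ → F ts) (pf : F ts) : F ts :=
  .all 0 (.all 1 (.imp (rel 0 1)
    (.box (.iff (Mf 0)
      (.and (.neg pf) (.and (pdia ts pf (Mf 1)) (.neg (pdiaN ts pf 2 (Mf 1)))))))))

/-- `A₅ = ∀x∀y □⋀_{t∈T}(M(x) ∧ P_t(y) → □(M(x) → P_t(y)))` -/
def A5g (ts : TileSet) (Mf : ℕ → F ts) (Pf : Fin (ts.s + 1) → ℕ → F ts) : F ts :=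
  .all 0 (.all 1 (.box (.bigAnd ((tiles ts).map fun t =>
    .imp (.and (Mf 0) (Pf t 1)) (.box (.imp (Mf 0) (Pf t 1)))))))

/-- `A₆ = ∀x □⋀_{t∈T}(P_t(x) → ⋀_{t'≠t} ¬P_{t'}(x))` -/
def A6g (ts : TileSet) (Pf : Fin (ts.s + 1) → ℕ → F ts) : F ts :=
  .all 0 (.box (.bigAnd ((tiles ts).map fun t =>
    .imp (Pf t 0)
      (.bigAnd (((tiles ts).filter (fun t' => decide (t' ≠ t))).map fun t' => .neg (Pf t' 0))))))

/-- `A₇ = ∀x∀y □⋀_{t∈T}(x◁y ∧ P_t(x) → ⋁_{right(t)=left(t')} P_{t'}(y))` -/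
def A7g (ts : TileSet) (rel : ℕ → ℕ → F ts) (Pf : Fin (ts.s + 1) → ℕ → F ts) : F ts :=
  .all 0 (.all 1 (.box (.bigAnd ((tiles ts).map fun t =>
    .imp (.and (rel 0 1) (Pf t 0))
      (.bigOr (((tiles ts).filter fun t' => decide (ts.right t = ts.left t')).map
        fun t' => Pf t' 1))))))

/-- `A₈ = ∀x∀y □⋀_{t∈T}(M(x) ∧ P_t(y) → □(∃y(x◁y ∧ M(y)) → ⋁_{up(t)=down(t')} P_{t'}(y)))` -/
def A8g (ts : TileSet) (rel : ℕ → ℕ → F ts) (Mf : ℕ → F ts)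
    (Pf : Fin (ts.s + 1) → ℕ → F ts) : F ts :=
  .all 0 (.all 1 (.box (.bigAnd ((tiles ts).map fun t =>
    .imp (.and (Mf 0) (Pf t 1))
      (.box (.imp (.ex 1 (.and (rel 0 1) (Mf 1)))
        (.bigOr (((tiles ts).filter fun t' => decide (ts.up t = ts.down t')).map
          fun t' => Pf t' 1))))))))

/-- `A₉ = ∀x(M(x) → □⟐P_{t₀}(x))` -/
def A9g (ts : TileSet) (Mf : ℕ → F ts) (Pf : Fin (ts.s + 1) → ℕ → F ts) (pf : F ts) : F ts :=
  .all 0 (.imp (Mf 0) (.box (pdia ts pf (Pf 0 0))))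

/-- The list `[A₀, …, A₈]` (all conjuncts of `A` except `A₉`), parametrised. -/
def AlistB (ts : TileSet) (rel : ℕ → ℕ → F ts) (Mf : ℕ → F ts)
    (Pf : Fin (ts.s + 1) → ℕ → F ts) (pf : F ts) : List (F ts) :=
  [A0g ts Pf, A1g ts Mf Pf, A2g ts rel, A3g ts rel Mf, A4g ts rel Mf pf,
   A5g ts Mf Pf, A6g ts Pf, A7g ts rel Pf, A8g ts rel Mf Pf]

/-- The tile letters `P_{t₀}, …, P_{t_s}`, i.e. `P₀, …, P_s`. -/
def PfA (ts : TileSet) : Fin (ts.s + 1) → ℕ → F ts := fun t v => Px ts (tl ts t) v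

/-- The formula `A`: the conjunction of `A₀` through `A₉`. -/
def A (ts : TileSet) : F ts :=
  .bigAnd (AlistB ts (ltA ts) (Mx ts) (PfA ts) (pp ts) ++
    [A9g ts (Mx ts) (PfA ts) (pp ts)])

/-- The formula `B`: the conjunction of `A₀` through `A₈`. -/
def B (ts : TileSet) : F ts := .bigAnd (AlistB ts (ltA ts) (Mx ts) (PfA ts) (pp ts))

/-- `A₉• = ∀x(M(x) → □(∃y M(y) → ⟐(∃y M(y) → P_{t₀}(x))))` -/
def A9bul (ts : TileSet) : F ts :=
  .all 0 (.imp (Mx ts 0) (.box (.imp (.ex 1 (Mx ts 1))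
    (pdia ts (pp ts) (.imp (.ex 1 (Mx ts 1)) (PfA ts 0 0))))))

/-- The formula `A•`: the conjunction of `A₀` through `A₈` together with `A₉•`. -/
def Abullet (ts : TileSet) : F ts :=
  .bigAnd (AlistB ts (ltA ts) (Mx ts) (PfA ts) (pp ts) ++ [A9bul ts])

/-- `⟐(P_{s+1}(x) ∧ P_{s+2}(y))`, the formula substituted for `x ◁ y` in `A′`. -/
def relA' (ts : TileSet) (v w : ℕ) : F ts :=
  pdia ts (pp ts) (.and (Px ts ⟨ts.s + 1, by omega⟩ v) (Px ts ⟨ts.s + 2, by omega⟩ w))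

/-- The formula `A′`: the result of substituting `⟐(P_{s+1}(x) ∧ P_{s+2}(y))` for
`x ◁ y` throughout `A`. -/
def A' (ts : TileSet) : F ts :=
  .bigAnd (AlistB ts (relA' ts) (Mx ts) (PfA ts) (pp ts) ++
    [A9g ts (Mx ts) (PfA ts) (pp ts)])

/-- `∀x P(x)`, the marker formula of the operator `⊡`. -/
def pfS (ts : TileSet) : F ts := .all 0 (PP ts 0)

/-- `⊡φ = ◇(∀x P(x) ∧ ◇(¬∀x P(x) ∧ φ))`. -/
def bdia (ts : TileSet) (φ : F ts) : F ts := pdia ts (pfS ts) φ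

/-- Iterated `⊡`. -/
def bdiaN (ts : TileSet) (n : ℕ) (φ : F ts) : F ts := pdiaN ts (pfS ts) n φ

/-- `q ∧ P(v)`, the replacement of `M(v)`. -/
def MS (ts : TileSet) (v : ℕ) : F ts := .and (qq ts) (PP ts v)

/-- `βₙ(x) = ∃y(⊡^{s+4}(q ∧ P(y)) ∧ ¬⊡^{s+5}(q ∧ P(y)) ∧
⊡(⊡^{n+1}(q ∧ P(y)) ∧ ¬⊡^{n+2}(q ∧ P(y)) ∧ P(x)))`, and `βₙ(y)` with `x`, `y` exchanged
(the variables `x`, `y` are `0`, `1`, so the bound variable is `1 - v`). -/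
def beta (ts : TileSet) (n : Fin (ts.s + 3)) (v : ℕ) : F ts :=
  .ex (1 - v) (.and (bdiaN ts (ts.s + 4) (MS ts (1 - v)))
    (.and (.neg (bdiaN ts (ts.s + 5) (MS ts (1 - v))))
      (bdia ts (.and (bdiaN ts ((n : ℕ) + 1) (MS ts (1 - v)))
        (.and (.neg (bdiaN ts ((n : ℕ) + 2) (MS ts (1 - v)))) (PP ts v))))))

/-- The replacement `βₜ` of the tile letters. -/
def PfS (ts : TileSet) : Fin (ts.s + 1) → ℕ → F ts := fun t v => beta ts (tl ts t) v

/-- `⊡(β_{s+1}(x) ∧ β_{s+2}(y))`, the replacement of `x ◁ y` in `A*`. -/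
def relS (ts : TileSet) (v w : ℕ) : F ts :=
  bdia ts (.and (beta ts ⟨ts.s + 1, by omega⟩ v) (beta ts ⟨ts.s + 2, by omega⟩ w))

/-- `A₄* = ∀x∀y(⊡(β_{s+1}(x) ∧ β_{s+2}(y)) →
□(q ∧ P(x) ↔ ¬∀x P(x) ∧ ⊡^{s+4}(q ∧ P(y)) ∧ ¬⊡^{s+5}(q ∧ P(y))))` -/
def A4star (ts : TileSet) : F ts :=
  .all 0 (.all 1 (.imp (relS ts 0 1)
    (.box (.iff (MS ts 0)
      (.and (.neg (pfS ts))
        (.and (bdiaN ts (ts.s + 4) (MS ts 1)) (.neg (bdiaN ts (ts.s + 5) (MS ts 1)))))))))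

/-- `A₉* = ∀x(q ∧ P(x) → □⊡β₀(x))` -/
def A9star (ts : TileSet) : F ts :=
  .all 0 (.imp (MS ts 0) (.box (bdia ts (beta ts ⟨0, by omega⟩ 0))))

/-- The list `[A₀*, …, A₈*]`. -/
def BstarList (ts : TileSet) : List (F ts) :=
  [A0g ts (PfS ts), A1g ts (MS ts) (PfS ts), A2g ts (relS ts), A3g ts (relS ts) (MS ts),
   A4star ts, A5g ts (MS ts) (PfS ts), A6g ts (PfS ts), A7g ts (relS ts) (PfS ts),
   A8g ts (relS ts) (MS ts) (PfS ts)]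

/-- The formula `A*`: the conjunction of `A₀*` through `A₉*`. -/
def Astar (ts : TileSet) : F ts := .bigAnd (BstarList ts ++ [A9star ts])

/-- The formula `B*`: the conjunction of `A₀*` through `A₈*`. -/
def Bstar (ts : TileSet) : F ts := .bigAnd (BstarList ts)

/-- The formula `A⁺`: the result of replacing every `□` in `A*` by `□⁺`. -/
def Aplus (ts : TileSet) : F ts := (Astar ts).plus

/-- The formula `B⁺`: the result of replacing every `□` in `B*` by `□⁺`. -/
def Bplus (ts : TileSet) : F ts := (Bstar ts).plus

end Enc

end FOML
namespace FOML
open Enc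

/-!
In a model of `A` the witnesses of `A₁` and `A₂` give individuals `x₀ ◁ x₁ ◁ ⋯`, the columns of the
grid, and `A₄` gives points `v₀ ≤ v₁ ≤ ⋯` of the frame with `M(xₘ)` true at `vₘ`, the rows; the tile
at `(n, m)` is the unique `t` with `P_t(xₙ)` true at `vₘ`. The crux is recurrence: `A₉` makes
`P_{t₀}(x₀)` true at arbitrarily late points satisfying `¬p`, but these need not be rows. By `A₄`
each `¬p`-point after `v_N` satisfies `M(xₙ)` for some `n ≥ N`: the negated `⟐²` forbids skipping a
maximal `p`-free interval. By `A₅` that point then carries the same tiles as `vₙ`.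

Conversely, a tiling is read along time: row `m` sits at time `2m`, and `p` marks the odd times.
-/

section Truth

variable {W : Type*} {R : W → W → Prop} {Pred : ℕ → Type} {M : KModel W R Pred}
  {w : W} {g : ℕ → M.Dom}

@[simp]
theorem truth_neg {φ : Fml Pred} : truth M (.neg φ) w g ↔ ¬ truth M φ w g := Iff.rfl

@[simp]
theorem truth_imp {φ ψ : Fml Pred} :
    truth M (.imp φ ψ) w g ↔ (truth M φ w g → truth M ψ w g) := Iff.rfl

@[simp]
theorem truth_box {φ : Fml Pred} :
    truth M (.box φ) w g ↔ ∀ v, R w v → truth M φ v g := Iff.rfl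

@[simp]
theorem truth_all {x : ℕ} {φ : Fml Pred} :
    truth M (.all x φ) w g ↔ ∀ d ∈ M.D w, truth M φ w (Function.update g x d) := Iff.rfl

@[simp]
theorem truth_and {φ ψ : Fml Pred} :
    truth M (.and φ ψ) w g ↔ truth M φ w g ∧ truth M ψ w g := by
  simp only [Fml.and, truth_neg, truth_imp, Classical.not_imp, not_not]

@[simp]
theorem truth_or {φ ψ : Fml Pred} :
    truth M (.or φ ψ) w g ↔ truth M φ w g ∨ truth M ψ w g := by
  simp only [Fml.or, truth_neg, truth_imp, or_iff_not_imp_left]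

@[simp]
theorem truth_iff {φ ψ : Fml Pred} :
    truth M (.iff φ ψ) w g ↔ (truth M φ w g ↔ truth M ψ w g) := by
  simp only [Fml.iff, truth_and, truth_imp, iff_iff_implies_and_implies]

@[simp]
theorem truth_dia {φ : Fml Pred} :
    truth M (.dia φ) w g ↔ ∃ v, R w v ∧ truth M φ v g := by
  simp only [Fml.dia, truth_neg, truth_box, not_forall, not_not, exists_prop]

@[simp]
theorem truth_ex {x : ℕ} {φ : Fml Pred} :
    truth M (.ex x φ) w g ↔ ∃ d ∈ M.D w, truth M φ w (Function.update g x d) := by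
  simp only [Fml.ex, truth_neg, truth_all, not_forall, not_not, exists_prop]

@[simp]
theorem truth_bigAnd {l : List (Fml Pred)} :
    truth M (.bigAnd l) w g ↔ ∀ φ ∈ l, truth M φ w g := by
  induction l with
  | nil => simp [Fml.bigAnd, Fml.top, truth]
  | cons φ l ih => simp [Fml.bigAnd, ih]

@[simp]
theorem truth_bigOr {l : List (Fml Pred)} :
    truth M (.bigOr l) w g ↔ ∃ φ ∈ l, truth M φ w g := by
  induction l with
  | nil => simp [Fml.bigOr, truth]
  | cons φ l ih => simp [Fml.bigOr, ih]

end Truth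

section MarkedDia

/-- The operator `⟐` on properties of points of an order: from `w` one can move up to a point
satisfying `p` and then up to a point satisfying `φ` but not `p`. -/
def MarkedDia {W : Type*} [LE W] (p φ : W → Prop) (w : W) : Prop :=
  ∃ a, w ≤ a ∧ p a ∧ ∃ b, a ≤ b ∧ ¬ p b ∧ φ b

theorem markedDia_congr_of_forall_not {W : Type*} [LinearOrder W] {p : W → Prop} {u v : W}
    (huv : u ≤ v) (hp : ∀ c ∈ Set.Icc u v, ¬ p c) (φ : W → Prop) :
    MarkedDia p φ u ↔ MarkedDia p φ v := by
  constructor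
  · rintro ⟨a, hua, ha, h⟩
    exact ⟨a, le_of_not_ge fun hav => hp a ⟨hua, hav⟩ ha, ha, h⟩
  · rintro ⟨a, hva, h⟩
    exact ⟨a, huv.trans hva, h⟩

theorem markedDia_comp {V W : Type*} [Preorder V] [Preorder W] (τ : PseudoEpimorphism W V)
    (p φ : V → Prop) (w : W) :
    MarkedDia (fun v => p (τ v)) (fun v => φ (τ v)) w ↔ MarkedDia p φ (τ w) := by
  constructor
  · rintro ⟨a, hwa, ha, b, hab, hb⟩
    exact ⟨τ a, OrderHomClass.mono τ hwa, ha, τ b, OrderHomClass.mono τ hab, hb⟩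
  · rintro ⟨i, hi, hpi, j, hij, hj⟩
    obtain ⟨a, hwa, rfl⟩ := exists_map_eq_of_map_le τ hi
    obtain ⟨b, hab, rfl⟩ := exists_map_eq_of_map_le τ hij
    exact ⟨a, hwa, hpi, b, hab, hj⟩

theorem markedDia_odd_eq_two_mul_succ (n k : ℕ) :
    MarkedDia Odd (· = 2 * (n + 1)) k ↔ k < 2 * (n + 1) := by
  constructor
  · rintro ⟨i, hki, hi, j, hij, -, rfl⟩
    grind
  · intro hk
    exact ⟨2 * n + 1, by omega, by grind, 2 * (n + 1), by omega, by grind, rfl⟩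

theorem markedDia_odd_lt_two_mul_succ (n k : ℕ) :
    MarkedDia Odd (· < 2 * (n + 1)) k ↔ k < 2 * n := by
  constructor
  · rintro ⟨i, hki, hi, j, hij, hj, hjn⟩
    grind
  · intro hk
    exact ⟨2 * n - 1, by omega, by grind, 2 * n, by omega, by grind, by omega⟩

theorem eq_two_mul_iff_markedDia_odd (n k : ℕ) :
    k = 2 * n ↔ ¬ Odd k ∧ MarkedDia Odd (· = 2 * (n + 1)) k ∧
      ¬ MarkedDia Odd (MarkedDia Odd (· = 2 * (n + 1))) k := by
  simp only [funext fun k => propext (markedDia_odd_eq_two_mul_succ n k),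
    markedDia_odd_lt_two_mul_succ]
  grind

end MarkedDia

section Encoding

variable {W : Type*}

namespace KModel

variable {R : W → W → Prop}

/-- The relation `x ◁ y` at `w`. -/
def NextAt {s : ℕ} (M : KModel W R (Letter s)) (w : W) (x y : M.Dom) : Prop :=
  M.I w 2 .lt ![x, y]

/-- The property `M(x)` at `w`; it makes `w` a row of the grid. -/
def MarkAt {s : ℕ} (M : KModel W R (Letter s)) (w : W) (x : M.Dom) : Prop :=
  M.I w 1 .M fun _ => x

/-- The property `P_t(x)` at `w`: column `x` carries tile `t` at `w`. -/
def TileAt {ts : TileSet} (M : KModel W R (Letter ts.s)) (w : W) (t : Fin (ts.s + 1))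
    (x : M.Dom) : Prop :=
  M.I w 1 (.P (tl ts t)) fun _ => x

/-- The proposition `p` at `w`. -/
def FlagAt {s : ℕ} (M : KModel W R (Letter s)) (w : W) : Prop :=
  M.I w 0 .p Fin.elim0

end KModel

section Atoms

variable {R : W → W → Prop} {ts : TileSet} {M : KModel W R (Letter ts.s)} {w : W} {g : ℕ → M.Dom}

@[simp]
theorem truth_pp : truth M (pp ts) w g ↔ M.FlagAt w := by
  simp only [pp, truth, KModel.FlagAt, Subsingleton.elim _ Fin.elim0]

@[simp]
theorem truth_Mx {v : ℕ} : truth M (Mx ts v) w g ↔ M.MarkAt w (g v) := Iff.rfl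

@[simp]
theorem truth_PfA {t : Fin (ts.s + 1)} {v : ℕ} :
    truth M (PfA ts t v) w g ↔ M.TileAt w t (g v) := Iff.rfl

@[simp]
theorem truth_ltA {u v : ℕ} : truth M (ltA ts u v) w g ↔ M.NextAt w (g u) (g v) := by
  have hargs : (fun i => g (![u, v] i)) = ![g u, g v] := by
    ext i; fin_cases i <;> rfl
  simp only [ltA, truth, KModel.NextAt, hargs]

end Atoms

variable [Preorder W] {ts : TileSet}

@[simp]
theorem truth_pdia {M : KModel W (fun a b : W => a ≤ b) (Letter ts.s)} {w : W} {g : ℕ → M.Dom}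
    {π φ : F ts} :
    truth M (pdia ts π φ) w g ↔
      MarkedDia (fun v => truth M π v g) (fun v => truth M φ v g) w := by
  simp only [pdia, truth_dia, truth_and, truth_neg, MarkedDia]

/-- The semantic content of the formula `A` at `w`: the fields are, in this order, the truth
conditions of the conjuncts `A₀, …, A₉`. -/
structure EncodingAxioms (M : KModel W (fun a b : W => a ≤ b) (Letter ts.s)) (w : W) : Prop where
  exists_untiled : ∃ x ∈ M.D w, ∀ v, w ≤ v → ∀ t, ¬ M.TileAt v t x
  exists_origin : ∃ x ∈ M.D w, (∃ t, M.TileAt w t x) ∧ M.MarkAt w x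
  exists_next : ∀ x ∈ M.D w, ∃ y ∈ M.D w, M.NextAt w x y
  next_persists : ∀ x ∈ M.D w, ∀ y ∈ M.D w, M.NextAt w x y →
    ∀ v, w ≤ v → ∀ z ∈ M.D v, M.MarkAt v z → M.NextAt v x y
  mark_iff : ∀ x ∈ M.D w, ∀ y ∈ M.D w, M.NextAt w x y → ∀ v, w ≤ v →
    (M.MarkAt v x ↔ ¬ M.FlagAt v ∧ MarkedDia M.FlagAt (M.MarkAt · y) v ∧
      ¬ MarkedDia M.FlagAt (MarkedDia M.FlagAt (M.MarkAt · y)) v)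
  tile_persists : ∀ x ∈ M.D w, ∀ y ∈ M.D w, ∀ v, w ≤ v → ∀ t, M.MarkAt v x → M.TileAt v t y →
    ∀ u, v ≤ u → M.MarkAt u x → M.TileAt u t y
  tile_unique : ∀ x ∈ M.D w, ∀ v, w ≤ v → ∀ t, M.TileAt v t x → ∀ t', t' ≠ t → ¬ M.TileAt v t' x
  tile_right : ∀ x ∈ M.D w, ∀ y ∈ M.D w, ∀ v, w ≤ v → ∀ t, M.NextAt v x y → M.TileAt v t x →
    ∃ t', ts.right t = ts.left t' ∧ M.TileAt v t' y
  tile_up : ∀ x ∈ M.D w, ∀ y ∈ M.D w, ∀ v, w ≤ v → ∀ t, M.MarkAt v x → M.TileAt v t y →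
    ∀ u, v ≤ u → ∀ z ∈ M.D u, M.NextAt u x z → M.MarkAt u z →
      ∃ t', ts.up t = ts.down t' ∧ M.TileAt u t' y
  zero_recurs : ∀ x ∈ M.D w, M.MarkAt w x → ∀ v, w ≤ v → MarkedDia M.FlagAt (M.TileAt · 0 x) v

theorem truth_A_iff {M : KModel W (fun a b : W => a ≤ b) (Letter ts.s)} {w : W} {g : ℕ → M.Dom} :
    truth M (A ts) w g ↔ EncodingAxioms M w := by
  simp only [A, AlistB, A0g, A1g, A2g, A3g, A4g, A5g, A6g, A7g, A8g, A9g, Ug, pdiaN, tiles,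
    truth_bigAnd, truth_bigOr, truth_neg, truth_imp, truth_and, truth_iff, truth_box, truth_all,
    truth_ex, truth_pdia, truth_pp, truth_Mx, truth_PfA, truth_ltA, Function.update_self,
    Function.update_of_ne, Function.update_idem, List.cons_append, List.nil_append, List.mem_cons,
    List.not_mem_nil, List.mem_map, List.mem_filter, List.mem_finRange, decide_eq_true_eq,
    forall_exists_index, exists_exists_and_eq_and, forall_apply_eq_imp_iff,
    forall_apply_eq_imp_iff₂, forall_eq_or_imp, forall_eq, and_imp, true_and, or_false, ne_eq,
    zero_ne_one, not_false_eq_true, not_forall, not_not]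
  exact ⟨fun ⟨h₀, h₁, h₂, h₃, h₄, h₅, h₆, h₇, h₈, h₉⟩ => ⟨h₀, h₁, h₂, h₃, h₄, h₅, h₆, h₇, h₈, h₉⟩,
    fun ⟨h₀, h₁, h₂, h₃, h₄, h₅, h₆, h₇, h₈, h₉⟩ => ⟨h₀, h₁, h₂, h₃, h₄, h₅, h₆, h₇, h₈, h₉⟩⟩

end Encoding

section TilingOfModel

variable {W : Type*} {ts : TileSet}

namespace EncodingAxioms

variable [Preorder W] {M : KModel W (fun a b : W => a ≤ b) (Letter ts.s)} {w : W}

theorem exists_next_marked (h : EncodingAxioms M w) {x : M.Dom} (hx : x ∈ M.D w) {v : W}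
    (hv : w ≤ v) (hxv : M.MarkAt v x) :
    ∃ y ∈ M.D w, M.NextAt w x y ∧ ∃ u, v ≤ u ∧ M.MarkAt u y := by
  obtain ⟨y, hy, hxy⟩ := h.exists_next x hx
  obtain ⟨-, ⟨c, hvc, -, u, hcu, -, hyu⟩, -⟩ := (h.mark_iff x hx y hy hxy v hv).1 hxv
  exact ⟨y, hy, hxy, u, hvc.trans hcu, hyu⟩

theorem tile_eq (h : EncodingAxioms M w) {x : M.Dom} (hx : x ∈ M.D w) {v : W} (hv : w ≤ v)
    {t t' : Fin (ts.s + 1)} (ht : M.TileAt v t x) (ht' : M.TileAt v t' x) : t = t' := by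
  by_contra hne
  exact h.tile_unique x hx v hv t ht t' (Ne.symm hne) ht'

end EncodingAxioms

/-- A grid inside a model, seen from `w`: the individuals `col n` are its columns and the points
`row m` of the frame its rows, the `m`-th row being marked by the `m`-th column. -/
structure ModelGrid [Preorder W] (M : KModel W (fun a b : W => a ≤ b) (Letter ts.s)) (w : W) where
  col : ℕ → M.Dom
  row : ℕ → W
  col_mem : ∀ n, col n ∈ M.D w
  next_col : ∀ n, M.NextAt w (col n) (col (n + 1))
  row_zero : row 0 = w
  row_mono : Monotone row
  mark : ∀ m, M.MarkAt (row m) (col m)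
  exists_tile_zero : ∃ t, M.TileAt (row 0) t (col 0)

theorem EncodingAxioms.nonempty_modelGrid [Preorder W]
    {M : KModel W (fun a b : W => a ≤ b) (Letter ts.s)} {w : W} (h : EncodingAxioms M w) :
    Nonempty (ModelGrid M w) := by
  let State := {q : M.Dom × W // q.1 ∈ M.D w ∧ w ≤ q.2 ∧ M.MarkAt q.2 q.1}
  have exists_step (q : State) : ∃ q' : State, M.NextAt w q.1.1 q'.1.1 ∧ q.1.2 ≤ q'.1.2 := by
    obtain ⟨⟨x, v⟩, hx, hv, hxv⟩ := q
    obtain ⟨y, hy, hxy, u, hvu, hyu⟩ := h.exists_next_marked hx hv hxv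
    exact ⟨⟨(y, u), hy, hv.trans hvu, hyu⟩, hxy, hvu⟩
  choose step hnext hle using exists_step
  obtain ⟨x₀, hx₀, hx₀t, hx₀w⟩ := h.exists_origin
  let state (n : ℕ) : State := step^[n] ⟨(x₀, w), hx₀, le_rfl, hx₀w⟩
  have state_succ (n : ℕ) : state (n + 1) = step (state n) := Function.iterate_succ_apply' ..
  exact ⟨{
    col := fun n => (state n).1.1
    row := fun n => (state n).1.2
    col_mem := fun n => (state n).2.1
    next_col := fun n => state_succ n ▸ hnext (state n)
    row_zero := rfl
    row_mono := monotone_nat_of_le_succ fun n => state_succ n ▸ hle (state n)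
    mark := fun n => (state n).2.2.2
    exists_tile_zero := hx₀t }⟩

namespace ModelGrid

section Preorder

variable [Preorder W] {M : KModel W (fun a b : W => a ≤ b) (Letter ts.s)} {w : W}
  (G : ModelGrid M w)

theorem le_row (m : ℕ) : w ≤ G.row m :=
  G.row_zero.ge.trans (G.row_mono m.zero_le)

theorem col_mem_row (n m : ℕ) : G.col n ∈ M.D (G.row m) :=
  M.D_mono (G.le_row m) (G.col_mem n)

variable (h : EncodingAxioms M w)
include h

theorem next_col_row (n m : ℕ) : M.NextAt (G.row m) (G.col n) (G.col (n + 1)) :=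
  h.next_persists _ (G.col_mem n) _ (G.col_mem (n + 1)) (G.next_col n) _ (G.le_row m) _
    (G.col_mem_row m m) (G.mark m)

theorem exists_tile_right {n m : ℕ} {t : Fin (ts.s + 1)} (ht : M.TileAt (G.row m) t (G.col n)) :
    ∃ t', ts.right t = ts.left t' ∧ M.TileAt (G.row m) t' (G.col (n + 1)) :=
  h.tile_right _ (G.col_mem n) _ (G.col_mem (n + 1)) _ (G.le_row m) t (G.next_col_row h n m) ht

theorem exists_tile_up {n m : ℕ} {t : Fin (ts.s + 1)} (ht : M.TileAt (G.row m) t (G.col n)) :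
    ∃ t', ts.up t = ts.down t' ∧ M.TileAt (G.row (m + 1)) t' (G.col n) :=
  h.tile_up _ (G.col_mem m) _ (G.col_mem n) _ (G.le_row m) t (G.mark m) ht
    _ (G.row_mono m.le_succ) _ (G.col_mem_row (m + 1) (m + 1)) (G.next_col_row h m (m + 1))
    (G.mark (m + 1))

theorem exists_tile (n m : ℕ) : ∃ t, M.TileAt (G.row m) t (G.col n) := by
  induction n with
  | zero =>
    induction m with
    | zero => exact G.exists_tile_zero
    | succ m ih =>
      obtain ⟨t, ht⟩ := ih
      exact (G.exists_tile_up h ht).imp fun _ => And.right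
  | succ n ih =>
    obtain ⟨t, ht⟩ := ih
    exact (G.exists_tile_right h ht).imp fun _ => And.right

variable {f : ℕ → ℕ → Fin (ts.s + 1)} (hf : ∀ n m, M.TileAt (G.row m) (f n m) (G.col n))
include hf

theorem T1_of_tileAt : ts.T1 f := by
  intro n m
  obtain ⟨t, hright, ht⟩ := G.exists_tile_right h (hf n m)
  rw [hright, h.tile_eq (G.col_mem (n + 1)) (G.le_row m) ht (hf (n + 1) m)]

theorem T2_of_tileAt : ts.T2 f := by
  intro n m
  obtain ⟨t, hup, ht⟩ := G.exists_tile_up h (hf n m)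
  rw [hup, h.tile_eq (G.col_mem n) (G.le_row (m + 1)) ht (hf n (m + 1))]

end Preorder

variable [LinearOrder W] {M : KModel W (fun a b : W => a ≤ b) (Letter ts.s)} {w : W}
  (G : ModelGrid M w) (h : EncodingAxioms M w)
include h

theorem markAt_congr_of_forall_not_flagAt (n : ℕ) {u v : W} (hu : w ≤ u) (huv : u ≤ v)
    (hfree : ∀ c ∈ Set.Icc u v, ¬ M.FlagAt c) :
    M.MarkAt u (G.col n) ↔ M.MarkAt v (G.col n) := by
  have mark_iff := h.mark_iff _ (G.col_mem n) _ (G.col_mem (n + 1)) (G.next_col n)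
  rw [mark_iff u hu, mark_iff v (hu.trans huv),
    markedDia_congr_of_forall_not huv hfree, markedDia_congr_of_forall_not huv hfree]
  simp only [hfree u ⟨le_rfl, huv⟩, hfree v ⟨huv, le_rfl⟩]

theorem markAt_or_exists_markAt_succ {n : ℕ} {u v : W} (hwu : w ≤ u) (huv : u ≤ v)
    (hu : M.MarkAt u (G.col n)) (hv : ¬ M.FlagAt v) :
    M.MarkAt v (G.col n) ∨ ∃ b, u < b ∧ b ≤ v ∧ M.MarkAt b (G.col (n + 1)) := by
  obtain ⟨hup, ⟨c, huc, hcp, b, hcb, hbp, hb⟩, hnot⟩ :=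
    (h.mark_iff _ (G.col_mem n) _ (G.col_mem (n + 1)) (G.next_col n) u hwu).1 hu
  have huc' : u < c := huc.lt_of_ne fun huc => hup (huc ▸ hcp)
  rcases le_total b v with hbv | hvb
  · exact .inr ⟨b, huc'.trans_le hcb, hbv, hb⟩
  by_cases huv_free : ∀ d ∈ Set.Icc u v, ¬ M.FlagAt d
  · exact .inl ((G.markAt_congr_of_forall_not_flagAt h n hwu huv huv_free).1 hu)
  -- A `p`-point in `[v, b]` besides the one in `[u, v]` would give `⟐²` of the mark at `u`.
  have hvb_free : ∀ d ∈ Set.Icc v b, ¬ M.FlagAt d := by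
    push Not at huv_free
    obtain ⟨e, ⟨hue, hev⟩, hep⟩ := huv_free
    rintro d ⟨hvd, hdb⟩ hdp
    exact hnot ⟨e, hue, hep, v, hev, hv, d, hvd, hdp, b, hdb, hbp, hb⟩
  have hcv : c < v := lt_of_not_ge fun hvc => hvb_free c ⟨hvc, hcb⟩ hcp
  exact .inr ⟨v, huc'.trans hcv, le_rfl,
    (G.markAt_congr_of_forall_not_flagAt h (n + 1) (hwu.trans huv) hvb hvb_free).2 hb⟩

theorem exists_markAt_of_row_le [LocallyFiniteOrder W] {N : ℕ} {v : W} (hNv : G.row N ≤ v)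
    (hv : ¬ M.FlagAt v) : ∃ n ≥ N, M.MarkAt v (G.col n) := by
  let S : Set W := {u ∈ Set.Icc (G.row N) v | ∃ n ≥ N, M.MarkAt u (G.col n)}
  obtain ⟨u, ⟨⟨hNu, huv⟩, n, hn, hu⟩, hmax⟩ : ∃ u, Maximal (· ∈ S) u :=
    ((Set.finite_Icc _ _).subset (Set.sep_subset _ _)).exists_maximal
      ⟨G.row N, ⟨le_rfl, hNv⟩, N, le_rfl, G.mark N⟩
  rcases G.markAt_or_exists_markAt_succ h ((G.le_row N).trans hNu) huv hu hv with
    hvn | ⟨b, hub, hbv, hb⟩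
  · exact ⟨n, hn, hvn⟩
  · exact absurd (hmax ⟨⟨hNu.trans hub.le, hbv⟩, n + 1, by omega, hb⟩ hub.le) hub.not_ge

theorem tile_eq_of_markAt {m : ℕ} {x : M.Dom} (hx : x ∈ M.D w) {u v : W} (hu : w ≤ u) (hv : w ≤ v)
    (hmu : M.MarkAt u (G.col m)) (hmv : M.MarkAt v (G.col m)) {t t' : Fin (ts.s + 1)}
    (ht : M.TileAt u t x) (ht' : M.TileAt v t' x) : t = t' := by
  rcases le_total u v with huv | hvu
  · exact h.tile_eq hx hv (h.tile_persists _ (G.col_mem m) x hx u hu t hmu ht v huv hmv) ht'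
  · exact h.tile_eq hx hu ht (h.tile_persists _ (G.col_mem m) x hx v hv t' hmv ht' u hvu hmu)

theorem T3_of_tileAt [LocallyFiniteOrder W] {f : ℕ → ℕ → Fin (ts.s + 1)}
    (hf : ∀ m, M.TileAt (G.row m) (f 0 m) (G.col 0)) : ts.T3 f := by
  refine Set.infinite_of_forall_exists_gt fun N => ?_
  obtain ⟨c, hNc, -, v, hcv, hvp, hv⟩ :=
    h.zero_recurs _ (G.col_mem 0) (by simpa only [G.row_zero] using G.mark 0) _ (G.le_row (N + 1))
  have hNv : G.row (N + 1) ≤ v := hNc.trans hcv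
  obtain ⟨m, hm, hmv⟩ := G.exists_markAt_of_row_le h hNv hvp
  exact ⟨m, G.tile_eq_of_markAt h (G.col_mem 0) (G.le_row m) ((G.le_row _).trans hNv)
    (G.mark m) hmv (hf m) hv, hm⟩

end ModelGrid

theorem exists_tiling_of_truth_A [LinearOrder W] [LocallyFiniteOrder W]
    {M : KModel W (fun a b : W => a ≤ b) (Letter ts.s)} {w : W} {g : ℕ → M.Dom}
    (hA : truth M (A ts) w g) :
    ∃ f : ℕ → ℕ → Fin (ts.s + 1), ts.T1 f ∧ ts.T2 f ∧ ts.T3 f := by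
  have h := truth_A_iff.1 hA
  obtain ⟨G⟩ := h.nonempty_modelGrid
  choose f hf using G.exists_tile h
  exact ⟨f, G.T1_of_tileAt h hf, G.T2_of_tileAt h hf, G.T3_of_tileAt h (hf 0)⟩

end TilingOfModel

section ModelOfTiling

variable {W : Type*}

/-- The model of `A` built from a tiling `f`, over any frame with a map `τ` to the time line `ℕ`:
the individual `some n` is the `n`-th column and `none` the individual required by `A₀`; row `m` is
at time `2 * m`, and `p` holds at the odd times. -/
def tilingModel {R : W → W → Prop} {s : ℕ} (f : ℕ → ℕ → Fin (s + 1)) (τ : W → ℕ) :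
    KModel W R (Letter s) where
  Dom := Option ℕ
  D _ := Set.univ
  D_ne _ := Set.univ_nonempty
  D_mono _ _ _ := subset_rfl
  I w _
    | .lt, a => a 1 = (a 0).map (· + 1)
    | .M, a => ∃ n ∈ a 0, τ w = 2 * n
    | .P j, a => ∃ n ∈ a 0, ∃ m, τ w = 2 * m ∧ (f n m : ℕ) = j
    | .Pm, _ => False
    | .p, _ => Odd (τ w)
    | .q, _ => False
  I_dom _ _ _ _ _ _ := Set.mem_univ _

namespace tilingModel

section Letters

variable {R : W → W → Prop} {ts : TileSet} {f : ℕ → ℕ → Fin (ts.s + 1)} {τ : W → ℕ} {w : W}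

theorem nextAt_iff {x y : Option ℕ} :
    (tilingModel f τ : KModel W R _).NextAt w x y ↔ y = x.map (· + 1) := Iff.rfl

theorem markAt_iff {x : Option ℕ} :
    (tilingModel f τ : KModel W R _).MarkAt w x ↔ ∃ n ∈ x, τ w = 2 * n := Iff.rfl

theorem markAt_some {n : ℕ} :
    (tilingModel f τ : KModel W R _).MarkAt w (some n) ↔ τ w = 2 * n := by
  simp [markAt_iff]

theorem not_markAt_none : ¬ (tilingModel f τ : KModel W R _).MarkAt w none := by
  simp [markAt_iff]

theorem tileAt_iff {t : Fin (ts.s + 1)} {x : Option ℕ} :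
    (tilingModel f τ : KModel W R _).TileAt w t x ↔ ∃ n ∈ x, ∃ m, τ w = 2 * m ∧ f n m = t := by
  simp only [Fin.ext_iff]
  rfl

theorem tileAt_some {t : Fin (ts.s + 1)} {n : ℕ} :
    (tilingModel f τ : KModel W R _).TileAt w t (some n) ↔ ∃ m, τ w = 2 * m ∧ f n m = t := by
  simp [tileAt_iff]

theorem not_tileAt_none {t : Fin (ts.s + 1)} :
    ¬ (tilingModel f τ : KModel W R _).TileAt w t none := by
  simp [tileAt_iff]

end Letters

variable [Preorder W] {ts : TileSet} {f : ℕ → ℕ → Fin (ts.s + 1)} {τ : PseudoEpimorphism W ℕ}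

theorem markAt_iff_markedDia_map_succ (x : Option ℕ) (v : W) :
    let M : KModel W (fun a b : W => a ≤ b) _ := tilingModel f τ
    let y := x.map (· + 1)
    M.MarkAt v x ↔ ¬ M.FlagAt v ∧ MarkedDia M.FlagAt (M.MarkAt · y) v ∧
      ¬ MarkedDia M.FlagAt (MarkedDia M.FlagAt (M.MarkAt · y)) v := by
  intro M y
  cases x with
  | none => simp [M, y, MarkedDia, not_markAt_none]
  | some n =>
    have flag : M.FlagAt = fun v => Odd (τ v) := rfl
    have mark : (M.MarkAt · y) = fun v => τ v = 2 * (n + 1) := funext fun _ => propext markAt_some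
    have dia : MarkedDia M.FlagAt (M.MarkAt · y) =
        fun v => MarkedDia Odd (· = 2 * (n + 1)) (τ v) := by
      funext v
      rw [flag, mark, markedDia_comp τ Odd (· = 2 * (n + 1))]
    rw [dia, flag, markedDia_comp τ Odd, markAt_some]
    exact eq_two_mul_iff_markedDia_odd n (τ v)

theorem tileAt_zero_recurs (h3 : ts.T3 f) (v : W) :
    let M : KModel W (fun a b : W => a ≤ b) _ := tilingModel f τ
    MarkedDia M.FlagAt (M.TileAt · 0 (some 0)) v := by
  intro M
  obtain ⟨m, hm, hvm⟩ := h3.exists_gt (τ v)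
  have htime : MarkedDia Odd (· = 2 * m) (τ v) :=
    ⟨2 * τ v + 1, by omega, by grind, 2 * m, by omega, by grind, rfl⟩
  obtain ⟨a, hva, ha, b, hab, hb, hbm⟩ := (markedDia_comp τ Odd (· = 2 * m) v).2 htime
  exact ⟨a, hva, ha, b, hab, hb, tileAt_some.2 ⟨m, hbm, hm⟩⟩

theorem encodingAxioms (h1 : ts.T1 f) (h2 : ts.T2 f) (h3 : ts.T3 f) {w : W} (hw : τ w = 0) :
    EncodingAxioms (tilingModel f τ) w where
  exists_untiled := ⟨none, trivial, fun _ _ _ => not_tileAt_none⟩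
  exists_origin := ⟨some 0, trivial, ⟨f 0 0, tileAt_some.2 ⟨0, hw, rfl⟩⟩, markAt_some.2 hw⟩
  exists_next x _ := ⟨x.map (· + 1), trivial, rfl⟩
  next_persists _ _ _ _ hxy _ _ _ _ _ := hxy
  mark_iff x _ y _ hxy v _ := by
    obtain rfl := nextAt_iff.1 hxy
    exact markAt_iff_markedDia_map_succ x v
  tile_persists x _ y _ v _ t hxv ht u _ hxu := by
    obtain ⟨n, hn, hv⟩ := markAt_iff.1 hxv
    obtain ⟨n', hn', hu⟩ := markAt_iff.1 hxu
    obtain rfl := Option.mem_unique hn hn'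
    obtain ⟨k, hk, m, hm, htk⟩ := tileAt_iff.1 ht
    exact tileAt_iff.2 ⟨k, hk, m, by omega, htk⟩
  tile_unique x _ v _ t ht t' hne ht' := by
    obtain ⟨n, hn, m, hm, rfl⟩ := tileAt_iff.1 ht
    obtain ⟨n', hn', m', hm', rfl⟩ := tileAt_iff.1 ht'
    obtain rfl := Option.mem_unique hn hn'
    obtain rfl : m = m' := by omega
    exact hne rfl
  tile_right x _ y _ v _ t hxy ht := by
    obtain ⟨n, rfl, m, hm, rfl⟩ := tileAt_iff.1 ht
    obtain rfl := nextAt_iff.1 hxy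
    exact ⟨f (n + 1) m, h1 n m, tileAt_some.2 ⟨m, hm, rfl⟩⟩
  tile_up x _ y _ v _ t hxv ht u _ z _ hxz hzu := by
    obtain ⟨k, rfl, hv⟩ := markAt_iff.1 hxv
    obtain rfl := nextAt_iff.1 hxz
    obtain ⟨n, rfl, m, hm, rfl⟩ := tileAt_iff.1 ht
    have hu : τ u = 2 * (k + 1) := markAt_some.1 hzu
    exact ⟨f n (m + 1), h2 n m, tileAt_some.2 ⟨m + 1, by omega, rfl⟩⟩
  zero_recurs x _ hxw v _ := by
    obtain ⟨n, rfl, hn⟩ := markAt_iff.1 hxw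
    obtain rfl : n = 0 := by omega
    exact tileAt_zero_recurs h3 v

end tilingModel

theorem not_validOn_neg_A [Preorder W] (τ : PseudoEpimorphism W ℕ) {w : W} (hw : τ w = 0)
    {ts : TileSet} {f : ℕ → ℕ → Fin (ts.s + 1)} (h1 : ts.T1 f) (h2 : ts.T2 f) (h3 : ts.T3 f) :
    ¬ ValidOn (fun a b : W => a ≤ b) (Fml.neg (A ts)) := fun hvalid =>
  hvalid (tilingModel f τ) w (fun _ => none) (fun _ => trivial)
    (truth_A_iff.2 (tilingModel.encodingAxioms h1 h2 h3 hw))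

end ModelOfTiling

theorem exists_pseudoEpimorphism_nat {W : Type*} [LinearOrder W] [LocallyFiniteOrder W]
    [NoMaxOrder W] (w : W) : ∃ τ : PseudoEpimorphism W ℕ, τ w = 0 := by
  let _ := LinearLocallyFiniteOrder.succOrder W
  let _ := LinearLocallyFiniteOrder.predOrder W
  let τ : W →o ℕ := ⟨fun v => (toZ w v).toNat, fun _ _ h => Int.toNat_le_toNat (toZ_le_toZ.2 h)⟩
  have time_iterate_succ (k : ℕ) : τ (Order.succ^[k] w) = k := by
    change (toZ w _).toNat = k
    rw [toZ_iterate_succ, Int.toNat_natCast]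
  have exists_time_eq (v : W) (k : ℕ) (hvk : τ v ≤ k) : ∃ u, v ≤ u ∧ τ u = k :=
    ⟨max v (Order.succ^[k] w), le_max_left .., by
      rw [τ.monotone.map_max, time_iterate_succ, max_eq_right hvk]⟩
  exact ⟨⟨τ, fun v k => exists_time_eq v k⟩, time_iterate_succ 0⟩

theorem statement0_general {W : Type*} [LinearOrder W] [LocallyFiniteOrder W] [NoMaxOrder W]
    [Nonempty W] (ts : TileSet) :
    (∃ f : ℕ → ℕ → Fin (ts.s + 1), ts.T1 f ∧ ts.T2 f ∧ ts.T3 f) ↔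
      ¬ ValidOn (fun a b : W => a ≤ b) (Fml.neg (A ts)) := by
  constructor
  · rintro ⟨f, h1, h2, h3⟩
    obtain ⟨w⟩ := ‹Nonempty W›
    obtain ⟨τ, hw⟩ := exists_pseudoEpimorphism_nat w
    exact not_validOn_neg_A τ hw h1 h2 h3
  · intro hvalid
    by_contra hnone
    exact hvalid fun _ _ _ _ hA => hnone (exists_tiling_of_truth_A hA)

/-- There exists a recurrent tiling of ℕ×ℕ (a function `f : ℕ×ℕ → T`
satisfying (T1), (T2) and (T3)) if and only if `¬A` is not valid on the frame `⟨ℕ,≤⟩`. -/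
theorem statement0 (ts : TileSet) :
    (∃ f : ℕ → ℕ → Fin (ts.s + 1), ts.T1 f ∧ ts.T2 f ∧ ts.T3 f) ↔
      ¬ ValidOn (fun a b : ℕ => a ≤ b) (Fml.neg (A ts)) :=
  statement0_general ts

end FOML
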